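/- Let W be a Morse sequence on K with reference pair (∧,∨), extension map ∧̃ and coextension map ∨̃, gradient flow Φ and coflow Φ*. Then for every p-chain c of K, the iterates of Φ on c stabilize and their stable value is ∧̃(∧(c)): there exists i ≥ 0 with Φ^{i+1}(c) = Φ^i(c), and for any such i, Φ^i(c) = ∧̃_p(∧_p(c)). Dually, the iterates of Φ* on c stabilize at ∨̃_p(∨_p(c)). -/

import Mathlib

/-! ## Basic notions: simplicial complexes, collapses, expansions, fillings -/

variable {V : Type*} [DecidableEq V]

/-- A (finite) simplicial complex: a finite collection of nonempty finite sets that is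
closed under taking nonempty subsets. -/
def IsComplex (K : Finset (Finset V)) : Prop :=
  ∀ τ ∈ K, τ.Nonempty ∧ ∀ σ, σ ⊆ τ → σ.Nonempty → σ ∈ K

/-- `ν` is a facet (inclusion-maximal face) of `K`. -/
def IsFacet (K : Finset (Finset V)) (ν : Finset V) : Prop :=
  ν ∈ K ∧ ∀ ρ ∈ K, ν ⊆ ρ → ρ = ν

/-- `(σ, τ)` is a free pair for `K`: `σ ⊊ τ` and `τ` is the only face of `K`
strictly containing `σ`. -/
def IsFreePair (K : Finset (Finset V)) (σ τ : Finset V) : Prop :=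
  σ ∈ K ∧ τ ∈ K ∧ σ ⊂ τ ∧ ∀ ρ ∈ K, σ ⊂ ρ → ρ = τ

/-- `K` is an elementary expansion of `L` (equivalently, `L` is an elementary collapse
of `K`): `L = K \ {σ, τ}` for some free pair `(σ, τ)` of `K`. -/
def ElemExpansion (L K : Finset (Finset V)) : Prop :=
  ∃ σ τ, IsFreePair K σ τ ∧ L = K \ {σ, τ}

/-- `K` is an elementary filling of `L` (equivalently, `L` is an elementary perforation
of `K`): `L = K \ {ν}` for some facet `ν` of `K`. -/
def ElemFilling (L K : Finset (Finset V)) : Prop :=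
  ∃ ν, IsFacet K ν ∧ L = K \ {ν}

/-- `L` is an elementary collapse of `K`. -/
def ElemCollapse (K L : Finset (Finset V)) : Prop :=
  ∃ σ τ, IsFreePair K σ τ ∧ L = K \ {σ, τ}

/-- `K` collapses onto `L`: there is a sequence of elementary collapses from `K` to `L`. -/
def CollapsesOnto (K L : Finset (Finset V)) : Prop :=
  Relation.ReflTransGen ElemCollapse K L

/-! ## Morse sequences -/

/-- A Morse sequence `⟨∅ = K₀, …, K_k = K⟩`: each `K_i` is a simplicial complex that is
an elementary expansion or an elementary filling of `K_{i-1}`. -/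
structure MorseSeq (V : Type*) [DecidableEq V] where
  k : ℕ
  seq : ℕ → Finset (Finset V)
  cpx : ∀ i ≤ k, IsComplex (seq i)
  init : seq 0 = ∅
  step : ∀ i, 1 ≤ i → i ≤ k → ElemExpansion (seq (i - 1)) (seq i) ∨ ElemFilling (seq (i - 1)) (seq i)

/-- The simplicial complex `K = K_k` on which the Morse sequence lives. -/
def MorseSeq.cplx (W : MorseSeq V) : Finset (Finset V) := W.seq W.k

/-- A face added by a filling step: a critical face of `W`. -/
def MorseSeq.Critical (W : MorseSeq V) (ν : Finset V) : Prop :=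
  ∃ i, 1 ≤ i ∧ i ≤ W.k ∧ W.seq i \ W.seq (i - 1) = {ν}

/-- `(σ, τ)` is a regular pair for `W`: the two faces are added together by an
elementary expansion step. -/
def MorseSeq.Regular (W : MorseSeq V) (σ τ : Finset V) : Prop :=
  ∃ i, 1 ≤ i ∧ i ≤ W.k ∧ σ ⊂ τ ∧ W.seq i \ W.seq (i - 1) = {σ, τ}

/-- `σ` is lower regular for `W`. -/
def MorseSeq.LowerRegular (W : MorseSeq V) (σ : Finset V) : Prop := ∃ τ, W.Regular σ τ

/-- `τ` is upper regular for `W`. -/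
def MorseSeq.UpperRegular (W : MorseSeq V) (τ : Finset V) : Prop := ∃ σ, W.Regular σ τ

/-! ## Chains modulo 2 -/

/-- The boundary `∂(σ)` of a simplex: the chain of its (nonempty) codimension-one faces. -/
def bd (σ : Finset V) : Finset (Finset V) :=
  σ.powerset.filter fun ρ => ρ.Nonempty ∧ ρ.card + 1 = σ.card

/-- The coboundary `δ(σ)` of a simplex in `K`: the chain of faces of `K` of
codimension one over `σ` containing `σ`. -/
def cobd (K : Finset (Finset V)) (σ : Finset V) : Finset (Finset V) :=
  K.filter fun τ => σ ⊆ τ ∧ σ.card + 1 = τ.card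

/-- Mod-2 linear extension: `chainSum c f` is the sum (symmetric difference) of
the chains `f σ` over `σ ∈ c`; an element belongs to it iff it belongs to an odd
number of the `f σ`. -/
def chainSum (c : Finset (Finset V)) (f : Finset V → Finset (Finset V)) : Finset (Finset V) :=
  (c.biUnion f).filter fun ν => (c.filter fun σ => ν ∈ f σ).card % 2 = 1

/-- `c` is a `p`-chain of `K`: a set of `p`-simplices of `K`. -/
def IsChainOf (K : Finset (Finset V)) (p : ℕ) (c : Finset (Finset V)) : Prop :=
  ∀ ν ∈ c, ν ∈ K ∧ ν.card = p + 1

/-- `c` is a chain of critical `p`-simplices of `W` (an element of `Ŵ[p]`). -/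
def IsCritChain (W : MorseSeq V) (p : ℕ) (c : Finset (Finset V)) : Prop :=
  ∀ ν ∈ c, W.Critical ν ∧ ν.card = p + 1

/-! ## Frames, reference and coreference maps -/

/-- A frame on `W`: it assigns to each `p`-simplex of `K` a chain of critical
`p`-simplices of `W`. -/
def IsFrame (W : MorseSeq V) (Υ : Finset V → Finset (Finset V)) : Prop :=
  ∀ ν ∈ W.cplx, ∀ μ ∈ Υ ν, W.Critical μ ∧ μ.card = ν.card

/-- `Λ` is the reference map of `W`: a frame with `Λ(ν) = ν` for critical `ν`, and
`Λ(τ) = 0`, `Λ(∂τ) = 0` for upper regular `τ`. -/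
def IsRefMap (W : MorseSeq V) (Λ : Finset V → Finset (Finset V)) : Prop :=
  IsFrame W Λ ∧ (∀ ν, W.Critical ν → Λ ν = {ν}) ∧
    ∀ τ, W.UpperRegular τ → Λ τ = ∅ ∧ chainSum (bd τ) Λ = ∅

/-- `Λ` is the coreference map of `W`: a frame with `Λ(ν) = ν` for critical `ν`, and
`Λ(σ) = 0`, `Λ(δσ) = 0` for lower regular `σ`. -/
def IsCorefMap (W : MorseSeq V) (Λ : Finset V → Finset (Finset V)) : Prop :=
  IsFrame W Λ ∧ (∀ ν, W.Critical ν → Λ ν = {ν}) ∧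
    ∀ σ, W.LowerRegular σ → Λ σ = ∅ ∧ chainSum (cobd W.cplx σ) Λ = ∅

/-- The extension map `∧̃` of `W` (defined from the coreference map `Vee`):
`∧̃(κ) = {ν ∈ K | κ ∈ ∨(ν)}`. -/
def extMap (W : MorseSeq V) (Vee : Finset V → Finset (Finset V)) (κ : Finset V) :
    Finset (Finset V) :=
  W.cplx.filter fun ν => κ ∈ Vee ν

/-- The coextension map `∨̃` of `W` (defined from the reference map `Λ`):
`∨̃(κ) = {ν ∈ K | κ ∈ ∧(ν)}`. -/
def coextMap (W : MorseSeq V) (Λ : Finset V → Finset (Finset V)) (κ : Finset V) :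
    Finset (Finset V) :=
  W.cplx.filter fun ν => κ ∈ Λ ν

/-! ## The gradient flow and coflow -/

open Classical in
/-- The discrete vector field of `W` on simplices: `Vf W σ = {τ}` if `(σ,τ)` is a regular
pair for `W`, and `Vf W ν = 0` if `ν` is critical or upper regular. -/
noncomputable def Vf (W : MorseSeq V) (σ : Finset V) : Finset (Finset V) :=
  W.cplx.filter fun τ => W.Regular σ τ

open Classical in
/-- The dual discrete vector field of `W` on simplices: `Vfs W τ = {σ}` if `(σ,τ)` is a
regular pair for `W`, and `Vfs W ν = 0` if `ν` is critical or lower regular. -/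
noncomputable def Vfs (W : MorseSeq V) (τ : Finset V) : Finset (Finset V) :=
  W.cplx.filter fun σ => W.Regular σ τ

/-- The gradient flow on a simplex: `Φ(ν) = ν + ∂(V(ν)) + V(∂(ν))`. -/
noncomputable def PhiSimp (W : MorseSeq V) (ν : Finset V) : Finset (Finset V) :=
  symmDiff {ν} (symmDiff (chainSum (Vf W ν) bd) (chainSum (bd ν) (Vf W)))

/-- The gradient flow `Φ` of `W`, extended linearly to chains. -/
noncomputable def Phi (W : MorseSeq V) (c : Finset (Finset V)) : Finset (Finset V) :=
  chainSum c (PhiSimp W)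

/-- The gradient coflow on a simplex: `Φ*(ν) = ν + δ(V*(ν)) + V*(δ(ν))`. -/
noncomputable def PhiStarSimp (W : MorseSeq V) (ν : Finset V) : Finset (Finset V) :=
  symmDiff {ν} (symmDiff (chainSum (Vfs W ν) (cobd W.cplx)) (chainSum (cobd W.cplx ν) (Vfs W)))

/-- The gradient coflow `Φ*` of `W`, extended linearly to chains. -/
noncomputable def PhiStar (W : MorseSeq V) (c : Finset (Finset V)) : Finset (Finset V) :=
  chainSum c (PhiStarSimp W)

/-!
Let `Φ`, `Λ` and `E` be the matrices over `ZMod 2` of the flow, of the reference map and of the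
extension map, with rows and columns indexed by the faces of `K`. Since `Φ = 1 + ∂V + V∂`, the
defining properties of the (co)reference maps give `ΛΦ = Λ` and `ΦE = E`. Order the faces by the
step of `W` at which they appear. The flow sends a regular face to strictly earlier ones, and it
sends upper regular faces to upper regular ones, so for large `n` the power `Φⁿ` kills every upper
regular face, as `Λ` does. A critical face `ν` differs from `E ν`, which `Φ` fixes, by upper
regular faces, so `Φⁿ ν = E ν = EΛ ν` for large `n`. The lower regular faces follow by induction
from `EΛΦ = EΛ`. Hence `Φⁿ = EΛ` for large `n`, and transposing this identity gives the result for
the coflow.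
-/

open Filter Matrix

section Iterate

theorem exists_iterate_succ_eq_of_eventually {α : Type*} {F : α → α} {c d : α}
    (h : ∀ᶠ n in atTop, F^[n] c = d) : ∃ i, F^[i + 1] c = F^[i] c := by
  obtain ⟨N, hN⟩ := eventually_atTop.1 h
  exact ⟨N, (hN _ N.le_succ).trans (hN _ le_rfl).symm⟩

theorem iterate_eq_of_eventually {α : Type*} {F : α → α} {c d : α}
    (h : ∀ᶠ n in atTop, F^[n] c = d) {i : ℕ} (hi : F^[i + 1] c = F^[i] c) : F^[i] c = d := by
  obtain ⟨N, hN⟩ := eventually_atTop.1 h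
  rw [Function.iterate_succ_apply'] at hi
  rw [← Function.iterate_fixed hi N, ← Function.iterate_add_apply, hN _ (N.le_add_right i)]

end Iterate

section MatrixPowers

variable {ι R : Type*} [Fintype ι] [DecidableEq ι] [Semiring R] {M : Matrix ι ι R}

theorem eventually_col_pow_eq_of_mul_eq_left {P : Matrix ι ι R} (hP : P * M = P) {y : ι}
    (h : ∀ x, M x y ≠ 0 → ∀ᶠ n in atTop, (M ^ n).col x = P.col x) :
    ∀ᶠ n in atTop, (M ^ n).col y = P.col y := by
  have hcols : ∀ᶠ n in atTop, ∀ x, M x y ≠ 0 → (M ^ n).col x = P.col x :=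
    eventually_all.2 fun x => eventually_imp_distrib_left.2 (h x)
  rw [← map_add_atTop_eq_nat 1, eventually_map]
  filter_upwards [hcols] with n hn
  ext z
  calc (M ^ (n + 1)) z y = ∑ x, (M ^ n) z x * M x y := by rw [pow_succ, mul_apply]
    _ = ∑ x, P z x * M x y := Finset.sum_congr rfl fun x _ => by
        by_cases hx : M x y = 0
        · rw [hx, mul_zero, mul_zero]
        · exact congrArg (· * M x y) (congrFun (hn x hx) z)
    _ = P z y := by rw [← mul_apply, hP]

theorem pow_mul_eq_of_mul_eq {E : Matrix ι ι R} (hE : M * E = E) (n : ℕ) : M ^ n * E = E := by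
  induction n with
  | zero => rw [pow_zero, one_mul]
  | succ n ih => rw [pow_succ, mul_assoc, hE, ih]

theorem eventually_col_pow_eq_of_mul_eq_right {E : Matrix ι ι R} (hE : M * E = E) {y : ι}
    (hy : E y y = 1) (h : ∀ x, x ≠ y → E x y ≠ 0 → ∀ᶠ n in atTop, (M ^ n).col x = 0) :
    ∀ᶠ n in atTop, (M ^ n).col y = E.col y := by
  have hcols : ∀ᶠ n in atTop, ∀ x, x ≠ y → E x y ≠ 0 → (M ^ n).col x = 0 :=
    eventually_all.2 fun x => eventually_imp_distrib_left.2 fun hx =>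
      eventually_imp_distrib_left.2 (h x hx)
  filter_upwards [hcols] with n hn
  ext z
  have hzero : ∀ x, x ≠ y → (M ^ n) z x * E x y = 0 := fun x hx => by
    by_cases hxy : E x y = 0
    · rw [hxy, mul_zero]
    · exact (congrArg (· * E x y) (congrFun (hn x hx hxy) z)).trans (zero_mul _)
  calc (M ^ n) z y = ∑ x, (M ^ n) z x * E x y := by
        rw [Fintype.sum_eq_single y hzero, hy, mul_one]
    _ = E z y := by rw [← mul_apply, pow_mul_eq_of_mul_eq hE]

end MatrixPowers

section ChainSum

variable {K c : Finset (Finset V)} {f : Finset V → Finset (Finset V)} {x : Finset V}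

theorem exists_mem_of_mem_chainSum (h : x ∈ chainSum c f) : ∃ y ∈ c, x ∈ f y :=
  Finset.mem_biUnion.1 (Finset.mem_filter.1 h).1

theorem mem_chainSum : x ∈ chainSum c f ↔ Odd (c.filter fun y => x ∈ f y).card := by
  rw [chainSum, Finset.mem_filter, ← Nat.odd_iff, and_iff_right_iff_imp]
  intro hodd
  obtain ⟨y, hy⟩ := Finset.card_pos.1 hodd.pos
  exact Finset.mem_biUnion.2 ⟨y, Finset.mem_filter.1 hy⟩

theorem mem_chainSum_of_unique {y : Finset V} (hy : y ∈ c) (hx : x ∈ f y)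
    (huniq : ∀ z ∈ c, x ∈ f z → z = y) : x ∈ chainSum c f := by
  have hfilter : (c.filter fun z => x ∈ f z) = {y} := by
    ext z
    rw [Finset.mem_filter, Finset.mem_singleton]
    exact ⟨fun hz => huniq z hz.1 hz.2, by rintro rfl; exact ⟨hy, hx⟩⟩
  rw [mem_chainSum, hfilter, Finset.card_singleton]
  exact odd_one

theorem chainSum_subset (h : ∀ y ∈ c, f y ⊆ K) : chainSum c f ⊆ K :=
  (Finset.filter_subset _ _).trans (Finset.biUnion_subset.2 h)

theorem chainSum_eq_empty (h : ∀ y ∈ c, f y = ∅) : chainSum c f = ∅ :=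
  Finset.subset_empty.1 (chainSum_subset fun y hy => (h y hy).subset)

theorem chainSum_singleton (y : Finset V) : chainSum {y} f = f y := by
  ext x
  refine ⟨fun hx => ?_, fun hx =>
    mem_chainSum_of_unique (Finset.mem_singleton_self y) hx fun z hz _ => Finset.mem_singleton.1 hz⟩
  obtain ⟨z, hz, hxz⟩ := exists_mem_of_mem_chainSum hx
  rwa [Finset.mem_singleton.1 hz] at hxz

end ChainSum

section ChainMatrix

variable {α : Type*} [DecidableEq α]

/-- The coordinate vector over `ZMod 2` of the chain `c`, with respect to the elements of `K`;
elements of `c` outside `K` are ignored. -/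
def chainVec (K c : Finset α) : K → ZMod 2 := fun x => if x.1 ∈ c then 1 else 0

/-- The matrix over `ZMod 2` of the linear extension of `f` to chains of `K`: its `y`-th column
is the coordinate vector of `f y`. -/
def chainMatrix (K : Finset α) (f : α → Finset α) : Matrix K K (ZMod 2) :=
  Matrix.of fun x y => chainVec K (f y) x

variable {K : Finset α} {f g : α → Finset α}

theorem chainMatrix_apply (x y : K) :
    chainMatrix K f x y = if x.1 ∈ f y.1 then 1 else 0 := rfl

theorem col_chainMatrix (y : K) : (chainMatrix K f).col y = chainVec K (f y) := rfl

theorem mem_of_chainMatrix_ne_zero {x y : K} (h : chainMatrix K f x y ≠ 0) : x.1 ∈ f y.1 := by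
  rw [chainMatrix_apply] at h
  exact (ite_ne_right_iff.1 h).1

theorem eq_of_chainVec_eq {c d : Finset α} (hc : c ⊆ K) (hd : d ⊆ K)
    (h : chainVec K c = chainVec K d) : c = d := by
  have hmem : ∀ x ∈ K, (x ∈ c ↔ x ∈ d) := fun x hx => by
    have hcoord := congrFun h ⟨x, hx⟩
    simp only [chainVec] at hcoord
    by_cases hxc : x ∈ c <;> by_cases hxd : x ∈ d <;> simp_all
  exact Finset.ext fun x => ⟨fun hx => (hmem x (hc hx)).1 hx, fun hx => (hmem x (hd hx)).2 hx⟩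

theorem chainVec_empty : chainVec K ∅ = 0 := rfl

theorem chainVec_singleton (y : K) : chainVec K {y.1} = Pi.single y 1 := by
  ext x
  simp only [chainVec, Finset.mem_singleton, Pi.single_apply, Subtype.ext_iff]

theorem chainVec_symmDiff (c d : Finset α) :
    chainVec K (symmDiff c d) = chainVec K c + chainVec K d := by
  ext x
  simp only [chainVec, Pi.add_apply, Finset.mem_symmDiff]
  by_cases hc : x.1 ∈ c <;> by_cases hd : x.1 ∈ d <;> simp [hc, hd, CharTwo.add_self_eq_zero]

theorem chainMatrix_singleton : chainMatrix K (fun x => {x}) = 1 :=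
  ext_col fun y => by
    rw [col_chainMatrix, chainVec_singleton, ← mulVec_single_one, one_mulVec]

theorem chainMatrix_symmDiff :
    chainMatrix K (fun x => symmDiff (f x) (g x)) = chainMatrix K f + chainMatrix K g :=
  ext_col fun y => chainVec_symmDiff (f y) (g y)

theorem chainMatrix_eq_transpose (h : ∀ x ∈ K, ∀ y ∈ K, (x ∈ f y ↔ y ∈ g x)) :
    chainMatrix K f = (chainMatrix K g)ᵀ := by
  ext x y
  exact if_congr (h x x.2 y y.2) rfl rfl

end ChainMatrix

section LinearExtension

variable {K c : Finset (Finset V)} {f g h : Finset V → Finset (Finset V)}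

theorem chainVec_chainSum (hc : c ⊆ K) :
    chainVec K (chainSum c f) = chainMatrix K f *ᵥ chainVec K c := by
  ext x
  have hcount : (chainMatrix K f *ᵥ chainVec K c) x =
      ((c.filter fun y => x.1 ∈ f y).card : ZMod 2) := by
    simp only [mulVec, dotProduct, chainMatrix_apply, chainVec, mul_ite, mul_one, mul_zero]
    rw [Finset.sum_coe_sort K fun y => if y ∈ c then if x.1 ∈ f y then (1 : ZMod 2) else 0 else 0,
      Finset.sum_ite_mem, Finset.inter_eq_right.2 hc, Finset.sum_boole]
  rw [hcount, chainVec]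
  split_ifs with hx
  · exact (mem_chainSum.1 hx).natCast_zmod_two.symm
  · rw [mem_chainSum, Nat.not_odd_iff_even] at hx
    exact (ZMod.natCast_eq_zero_iff_even.2 hx).symm

theorem chainMatrix_chainSum (hg : ∀ x ∈ K, g x ⊆ K) :
    chainMatrix K (fun x => chainSum (g x) f) = chainMatrix K f * chainMatrix K g :=
  ext_col fun y => chainVec_chainSum (hg y y.2)

theorem chainMatrix_mul_eq_zero (hg : ∀ x ∈ K, g x ⊆ K) (hf : ∀ x ∈ K, ∀ y ∈ g x, f y = ∅) :
    chainMatrix K f * chainMatrix K g = 0 := by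
  rw [← chainMatrix_chainSum hg]
  exact ext_col fun y => congrArg (chainVec K) (chainSum_eq_empty (hf y y.2))

theorem iterate_chainSum_subset (hf : ∀ x ∈ K, f x ⊆ K) (hc : c ⊆ K) (n : ℕ) :
    (chainSum · f)^[n] c ⊆ K := by
  induction n with
  | zero => exact hc
  | succ n ih =>
    rw [Function.iterate_succ_apply']
    exact chainSum_subset fun x hx => hf x (ih hx)

theorem chainVec_iterate_chainSum (hf : ∀ x ∈ K, f x ⊆ K) (hc : c ⊆ K) (n : ℕ) :
    chainVec K ((chainSum · f)^[n] c) = chainMatrix K f ^ n *ᵥ chainVec K c := by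
  induction n with
  | zero => rw [pow_zero, one_mulVec, Function.iterate_zero_apply]
  | succ n ih =>
    rw [Function.iterate_succ_apply', chainVec_chainSum (iterate_chainSum_subset hf hc n), ih,
      mulVec_mulVec, pow_succ']

theorem eventually_iterate_chainSum_eq (hf : ∀ x ∈ K, f x ⊆ K) (hg : ∀ x ∈ K, g x ⊆ K)
    (hh : ∀ x ∈ K, h x ⊆ K) (hc : c ⊆ K)
    (hpow : ∀ᶠ n in atTop, chainMatrix K f ^ n = chainMatrix K h * chainMatrix K g) :
    ∀ᶠ n in atTop, (chainSum · f)^[n] c = chainSum (chainSum c g) h := by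
  have hcg : chainSum c g ⊆ K := chainSum_subset fun x hx => hg x (hc hx)
  filter_upwards [hpow] with n hn
  refine eq_of_chainVec_eq (iterate_chainSum_subset hf hc n)
    (chainSum_subset fun x hx => hh x (hcg hx)) ?_
  rw [chainVec_iterate_chainSum hf hc, hn, chainVec_chainSum hcg, chainVec_chainSum hc,
    mulVec_mulVec]

end LinearExtension

section Flow

/-- The flow `1 + dv + vd` on simplices generated by a vector field `v` and a (co)boundary `d`.
It specializes definitionally to `PhiSimp W` for `Vf W` and `bd`, and to `PhiStarSimp W` for
`Vfs W` and `cobd W.cplx`. -/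
def flowSimp (v d : Finset V → Finset (Finset V)) (x : Finset V) : Finset (Finset V) :=
  symmDiff {x} (symmDiff (chainSum (v x) d) (chainSum (d x) v))

variable {K : Finset (Finset V)} {v d L : Finset V → Finset (Finset V)}

theorem flowSimp_subset (hv : ∀ x ∈ K, v x ⊆ K) (hd : ∀ x ∈ K, d x ⊆ K) :
    ∀ x ∈ K, flowSimp v d x ⊆ K := fun x hx =>
  symmDiff_le_sup.trans <| sup_le (Finset.singleton_subset_iff.2 hx) <| symmDiff_le_sup.trans <|
    sup_le (chainSum_subset fun y hy => hd y (hv x hx hy))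
      (chainSum_subset fun y hy => hv y (hd x hx hy))

theorem chainMatrix_flowSimp (hv : ∀ x ∈ K, v x ⊆ K) (hd : ∀ x ∈ K, d x ⊆ K) :
    chainMatrix K (flowSimp v d) =
      1 + (chainMatrix K d * chainMatrix K v + chainMatrix K v * chainMatrix K d) := by
  unfold flowSimp
  rw [chainMatrix_symmDiff, chainMatrix_symmDiff, chainMatrix_singleton, chainMatrix_chainSum hv,
    chainMatrix_chainSum hd]

theorem chainMatrix_mul_flowSimp (hv : ∀ x ∈ K, v x ⊆ K) (hd : ∀ x ∈ K, d x ⊆ K)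
    (hL : ∀ x ∈ K, ∀ y ∈ v x, L y = ∅ ∧ chainSum (d y) L = ∅) :
    chainMatrix K L * chainMatrix K (flowSimp v d) = chainMatrix K L := by
  have hLv : chainMatrix K L * chainMatrix K v = 0 :=
    chainMatrix_mul_eq_zero hv fun x hx y hy => (hL x hx y hy).1
  have hLdv : chainMatrix K L * chainMatrix K d * chainMatrix K v = 0 := by
    rw [← chainMatrix_chainSum hd]
    exact chainMatrix_mul_eq_zero hv fun x hx y hy => (hL x hx y hy).2
  rw [chainMatrix_flowSimp hv hd, mul_add, mul_add, mul_one, ← mul_assoc, ← mul_assoc, hLdv, hLv,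
    zero_mul, add_zero, add_zero]

end Flow

namespace MorseSeq

variable {W : MorseSeq V} {ν ρ σ τ : Finset V}

theorem seq_subset_seq {i j : ℕ} (hij : i ≤ j) (hj : j ≤ W.k) : W.seq i ⊆ W.seq j := by
  induction j, hij using Nat.le_induction with
  | base => exact Finset.Subset.refl _
  | succ n _ ih =>
    refine (ih (by lia)).trans ?_
    rcases W.step (n + 1) n.succ_pos hj with ⟨σ, τ, -, hseq⟩ | ⟨ν, -, hseq⟩ <;>
    · rw [Nat.add_sub_cancel] at hseq
      exact hseq ▸ Finset.sdiff_subset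

/-- The step of the Morse sequence at which a face appears; it has the junk value `0` for a
simplex that belongs to no `W.seq i`. -/
noncomputable def birth (W : MorseSeq V) (ν : Finset V) : ℕ := sInf {i | ν ∈ W.seq i}

theorem birth_le {i : ℕ} (hν : ν ∈ W.seq i) : W.birth ν ≤ i := Nat.sInf_le hν

theorem mem_seq_birth {i : ℕ} (hν : ν ∈ W.seq i) : ν ∈ W.seq (W.birth ν) :=
  Nat.sInf_mem (s := {i | ν ∈ W.seq i}) ⟨i, hν⟩

theorem birth_pos (hν : ν ∈ W.cplx) : 1 ≤ W.birth ν := by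
  refine Nat.one_le_iff_ne_zero.2 fun hzero => ?_
  have hmem := mem_seq_birth hν
  rw [hzero, W.init] at hmem
  exact Finset.notMem_empty _ hmem

theorem mem_sdiff_birth (hν : ν ∈ W.cplx) :
    ν ∈ W.seq (W.birth ν) \ W.seq (W.birth ν - 1) := by
  refine Finset.mem_sdiff.2 ⟨mem_seq_birth hν, fun hprev => ?_⟩
  have := birth_le hprev
  have := birth_pos hν
  lia

theorem birth_eq_of_mem_sdiff {i : ℕ} (hi : i ≤ W.k) (hν : ν ∈ W.seq i \ W.seq (i - 1)) :
    W.birth ν = i := by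
  obtain ⟨hmem, hprev⟩ := Finset.mem_sdiff.1 hν
  refine le_antisymm (birth_le hmem) (not_lt.1 fun hlt => hprev ?_)
  exact seq_subset_seq (by lia) (by lia) (mem_seq_birth hmem)

theorem birth_le_birth_of_subset (hτ : τ ∈ W.cplx) (hσ : σ.Nonempty) (hστ : σ ⊆ τ) :
    W.birth σ ≤ W.birth τ :=
  birth_le ((W.cpx _ (birth_le hτ) τ (mem_seq_birth hτ)).2 σ hστ hσ)

theorem nonempty_of_mem_cplx (hν : ν ∈ W.cplx) : ν.Nonempty := (W.cpx _ le_rfl ν hν).1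

theorem mem_cplx_of_subset (hτ : τ ∈ W.cplx) (hσ : σ.Nonempty) (hστ : σ ⊆ τ) : σ ∈ W.cplx :=
  (W.cpx _ le_rfl τ hτ).2 σ hστ hσ

theorem critical_or_lowerRegular_or_upperRegular (hν : ν ∈ W.cplx) :
    W.Critical ν ∨ W.LowerRegular ν ∨ W.UpperRegular ν := by
  have hnew := mem_sdiff_birth hν
  rcases W.step _ (birth_pos hν) (birth_le hν) with ⟨σ, τ, hfree, hseq⟩ | ⟨μ, hfacet, hseq⟩
  · have hpair : W.seq (W.birth ν) \ W.seq (W.birth ν - 1) = {σ, τ} := by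
      rw [hseq, Finset.sdiff_sdiff_eq_self]
      exact Finset.insert_subset hfree.1 (Finset.singleton_subset_iff.2 hfree.2.1)
    have hreg : W.Regular σ τ := ⟨_, birth_pos hν, birth_le hν, hfree.2.2.1, hpair⟩
    rw [hpair, Finset.mem_insert, Finset.mem_singleton] at hnew
    rcases hnew with rfl | rfl
    exacts [Or.inr (Or.inl ⟨τ, hreg⟩), Or.inr (Or.inr ⟨σ, hreg⟩)]
  · have hsingle : W.seq (W.birth ν) \ W.seq (W.birth ν - 1) = {μ} := by
      rw [hseq, Finset.sdiff_sdiff_eq_self (Finset.singleton_subset_iff.2 hfacet.1)]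
    rw [hsingle, Finset.mem_singleton] at hnew
    exact Or.inl ⟨_, birth_pos hν, birth_le hν, hnew ▸ hsingle⟩

theorem Critical.mem_cplx (hν : W.Critical ν) : ν ∈ W.cplx := by
  obtain ⟨i, -, hi, hnew⟩ := hν
  have hmem : ν ∈ W.seq i \ W.seq (i - 1) := hnew ▸ Finset.mem_singleton_self ν
  exact seq_subset_seq hi le_rfl (Finset.mem_sdiff.1 hmem).1

theorem Critical.eq_of_birth_eq (hν : W.Critical ν) (hρ : ρ ∈ W.cplx)
    (hbirth : W.birth ρ = W.birth ν) : ρ = ν := by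
  obtain ⟨i, -, hi, hnew⟩ := hν
  have hνi : W.birth ν = i := birth_eq_of_mem_sdiff hi (hnew ▸ Finset.mem_singleton_self ν)
  have hmem := mem_sdiff_birth hρ
  rwa [hbirth, hνi, hnew, Finset.mem_singleton] at hmem

namespace Regular

theorem ssubset (h : W.Regular σ τ) : σ ⊂ τ := h.choose_spec.2.2.1

theorem left_mem_cplx (h : W.Regular σ τ) : σ ∈ W.cplx := by
  obtain ⟨i, -, hi, -, hnew⟩ := h
  have hmem : σ ∈ W.seq i \ W.seq (i - 1) := hnew ▸ Finset.mem_insert_self σ {τ}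
  exact seq_subset_seq hi le_rfl (Finset.mem_sdiff.1 hmem).1

theorem right_mem_cplx (h : W.Regular σ τ) : τ ∈ W.cplx := by
  obtain ⟨i, -, hi, -, hnew⟩ := h
  have hmem : τ ∈ W.seq i \ W.seq (i - 1) :=
    hnew ▸ Finset.mem_insert_of_mem (Finset.mem_singleton_self τ)
  exact seq_subset_seq hi le_rfl (Finset.mem_sdiff.1 hmem).1

theorem birth_eq (h : W.Regular σ τ) : W.birth τ = W.birth σ := by
  obtain ⟨i, -, hi, -, hnew⟩ := h
  have hσi : W.birth σ = i := birth_eq_of_mem_sdiff hi (hnew ▸ Finset.mem_insert_self σ {τ})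
  have hτi : W.birth τ = i :=
    birth_eq_of_mem_sdiff hi (hnew ▸ Finset.mem_insert_of_mem (Finset.mem_singleton_self τ))
  rw [hσi, hτi]

theorem eq_or_eq_of_birth_eq (h : W.Regular σ τ) (hρ : ρ ∈ W.cplx)
    (hbirth : W.birth ρ = W.birth σ) : ρ = σ ∨ ρ = τ := by
  obtain ⟨i, -, hi, -, hnew⟩ := h
  have hσi : W.birth σ = i := birth_eq_of_mem_sdiff hi (hnew ▸ Finset.mem_insert_self σ {τ})
  have hmem := mem_sdiff_birth hρ
  rwa [hbirth, hσi, hnew, Finset.mem_insert, Finset.mem_singleton] at hmem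

theorem right_unique (h : W.Regular σ τ) (h' : W.Regular σ ρ) : ρ = τ :=
  (h.eq_or_eq_of_birth_eq h'.right_mem_cplx h'.birth_eq).resolve_left h'.ssubset.ne'

theorem left_unique (h : W.Regular σ τ) (h' : W.Regular ρ τ) : ρ = σ :=
  (h.eq_or_eq_of_birth_eq h'.left_mem_cplx (h'.birth_eq.symm.trans h.birth_eq)).resolve_right
    h'.ssubset.ne

theorem not_regular_right (h : W.Regular σ τ) : ¬W.Regular τ ρ := fun h' => by
  rcases h.eq_or_eq_of_birth_eq h'.right_mem_cplx (h'.birth_eq.trans h.birth_eq) with rfl | rfl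
  · exact ssubset_asymm h.ssubset h'.ssubset
  · exact ssubset_irrefl _ h'.ssubset

theorem card_add_one (h : W.Regular σ τ) : σ.card + 1 = τ.card := by
  -- A face strictly between `σ` and `τ` would have to be born with them.
  obtain ⟨v, hvτ, hvσ⟩ := Finset.exists_of_ssubset h.ssubset
  have hsub : insert v σ ⊆ τ := Finset.insert_subset hvτ h.ssubset.subset
  have hmem : insert v σ ∈ W.cplx :=
    mem_cplx_of_subset h.right_mem_cplx (Finset.insert_nonempty v σ) hsub
  have hbirth : W.birth (insert v σ) = W.birth σ := le_antisymm
    (h.birth_eq ▸ birth_le_birth_of_subset h.right_mem_cplx (Finset.insert_nonempty v σ) hsub)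
    (birth_le_birth_of_subset hmem (nonempty_of_mem_cplx h.left_mem_cplx)
      (Finset.subset_insert v σ))
  have hins : insert v σ = τ := (h.eq_or_eq_of_birth_eq hmem hbirth).resolve_left
    (Finset.ssubset_insert hvσ).ne'
  rw [← hins, Finset.card_insert_of_notMem hvσ]

theorem mem_bd (h : W.Regular σ τ) : σ ∈ bd τ :=
  Finset.mem_filter.2 ⟨Finset.mem_powerset.2 h.ssubset.subset,
    nonempty_of_mem_cplx h.left_mem_cplx, h.card_add_one⟩

end Regular

theorem bd_subset_cplx (W : MorseSeq V) : ∀ τ ∈ W.cplx, bd τ ⊆ W.cplx := fun τ hτ σ hσ => by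
  obtain ⟨hsub, hne, -⟩ := Finset.mem_filter.1 hσ
  exact mem_cplx_of_subset hτ hne (Finset.mem_powerset.1 hsub)

theorem birth_lt_or_regular_of_mem_bd (hτ : τ ∈ W.cplx) (hσ : σ ∈ bd τ) :
    W.birth σ < W.birth τ ∨ W.Regular σ τ := by
  have hσK := W.bd_subset_cplx τ hτ hσ
  obtain ⟨hsub, hne, hcard⟩ := Finset.mem_filter.1 hσ
  have hss : σ ⊂ τ := (Finset.mem_powerset.1 hsub).ssubset_of_ne (by rintro rfl; lia)
  refine (birth_le_birth_of_subset hτ hne hss.subset).lt_or_eq.imp_right fun hbirth => ?_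
  rcases critical_or_lowerRegular_or_upperRegular hτ with hcrit | ⟨ρ, hreg⟩ | ⟨ρ, hreg⟩
  · exact absurd (hcrit.eq_of_birth_eq hσK hbirth) hss.ne
  · rcases hreg.eq_or_eq_of_birth_eq hσK hbirth with rfl | rfl
    exacts [absurd hss (ssubset_irrefl _), absurd hss (ssubset_asymm hreg.ssubset)]
  · rcases hreg.eq_or_eq_of_birth_eq hσK (hbirth.trans hreg.birth_eq) with rfl | rfl
    exacts [hreg, absurd hss (ssubset_irrefl _)]

theorem mem_Vf : τ ∈ Vf W σ ↔ W.Regular σ τ := by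
  simp only [Vf, Finset.mem_filter, and_iff_right_iff_imp]
  exact Regular.right_mem_cplx

theorem mem_Vfs : σ ∈ Vfs W τ ↔ W.Regular σ τ := by
  simp only [Vfs, Finset.mem_filter, and_iff_right_iff_imp]
  exact Regular.left_mem_cplx

theorem Vf_subset_cplx (W : MorseSeq V) : ∀ σ ∈ W.cplx, Vf W σ ⊆ W.cplx :=
  fun _ _ _ hτ => (mem_Vf.1 hτ).right_mem_cplx

theorem Vfs_subset_cplx (W : MorseSeq V) : ∀ τ ∈ W.cplx, Vfs W τ ⊆ W.cplx :=
  fun _ _ _ hσ => (mem_Vfs.1 hσ).left_mem_cplx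

theorem cobd_subset_cplx (W : MorseSeq V) : ∀ σ ∈ W.cplx, cobd W.cplx σ ⊆ W.cplx :=
  fun _ _ => Finset.filter_subset _ _

theorem Regular.Vf_left (h : W.Regular σ τ) : Vf W σ = {τ} := by
  ext ρ
  rw [mem_Vf, Finset.mem_singleton]
  exact ⟨h.right_unique, fun hρ => hρ ▸ h⟩

theorem Regular.Vf_right (h : W.Regular σ τ) : Vf W τ = ∅ :=
  Finset.eq_empty_of_forall_notMem fun _ hρ => h.not_regular_right (mem_Vf.1 hρ)

theorem PhiSimp_subset_cplx (W : MorseSeq V) : ∀ ν ∈ W.cplx, PhiSimp W ν ⊆ W.cplx :=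
  flowSimp_subset W.Vf_subset_cplx W.bd_subset_cplx

theorem PhiStarSimp_subset_cplx (W : MorseSeq V) : ∀ ν ∈ W.cplx, PhiStarSimp W ν ⊆ W.cplx :=
  flowSimp_subset W.Vfs_subset_cplx W.cobd_subset_cplx

theorem Regular.upperRegular_and_birth_lt_of_mem_PhiSimp (h : W.Regular σ τ)
    (hν : ν ∈ PhiSimp W τ) : W.UpperRegular ν ∧ W.birth ν < W.birth τ := by
  -- The summand `τ` of `Φ(τ)` cancels against the term `τ = V(σ)` of `V(∂τ)`.
  have hτ : τ ∈ chainSum (bd τ) (Vf W) := mem_chainSum_of_unique h.mem_bd (mem_Vf.2 h)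
    fun ρ _ hρ => h.left_unique (mem_Vf.1 hρ)
  rw [PhiSimp, h.Vf_right, chainSum_eq_empty (by simp), ← Finset.bot_eq_empty, bot_symmDiff,
    Finset.mem_symmDiff, Finset.mem_singleton] at hν
  obtain ⟨hmem, hne⟩ : ν ∈ chainSum (bd τ) (Vf W) ∧ ν ≠ τ :=
    hν.resolve_left fun hντ => hντ.2 (hντ.1 ▸ hτ)
  obtain ⟨ρ, hρτ, hνρ⟩ := exists_mem_of_mem_chainSum hmem
  have hreg : W.Regular ρ ν := mem_Vf.1 hνρ
  refine ⟨⟨ρ, hreg⟩, hreg.birth_eq ▸ ?_⟩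
  exact (birth_lt_or_regular_of_mem_bd h.right_mem_cplx hρτ).resolve_right
    fun hρ => hne (hρ.right_unique hreg)

theorem Regular.birth_lt_of_mem_chainSum_bd_Vf (h : W.Regular σ τ)
    (hν : ν ∈ chainSum (bd σ) (Vf W)) : W.birth ν < W.birth σ := by
  obtain ⟨ρ, hρσ, hνρ⟩ := exists_mem_of_mem_chainSum hν
  rw [(mem_Vf.1 hνρ).birth_eq]
  exact (birth_lt_or_regular_of_mem_bd h.left_mem_cplx hρσ).resolve_right
    fun hρ => hρ.not_regular_right h

theorem Regular.birth_lt_of_mem_PhiSimp (h : W.Regular σ τ) (hν : ν ∈ PhiSimp W σ) :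
    W.birth ν < W.birth σ := by
  -- The summand `σ` of `Φ(σ)` cancels against the term `σ` of `∂(V(σ)) = ∂τ`.
  have hσ : σ ∉ chainSum (bd σ) (Vf W) := fun hmem =>
    (h.birth_lt_of_mem_chainSum_bd_Vf hmem).false
  rw [PhiSimp, h.Vf_left, chainSum_singleton] at hν
  by_cases hVbd : ν ∈ chainSum (bd σ) (Vf W)
  · exact h.birth_lt_of_mem_chainSum_bd_Vf hVbd
  have hne : ν ≠ σ := by
    rintro rfl
    simp [Finset.mem_symmDiff, h.mem_bd, hσ] at hν
  have hbd : ν ∈ bd τ := by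
    simpa [Finset.mem_symmDiff, hne, hVbd] using hν
  rw [← h.birth_eq]
  exact (birth_lt_or_regular_of_mem_bd h.right_mem_cplx hbd).resolve_right
    fun hreg => hne (h.left_unique hreg)

end MorseSeq

section ReferenceMaps

variable {W : MorseSeq V} {Λ Vee : Finset V → Finset (Finset V)}

theorem chainMatrix_extMap (W : MorseSeq V) (Vee : Finset V → Finset (Finset V)) :
    chainMatrix W.cplx (extMap W Vee) = (chainMatrix W.cplx Vee)ᵀ :=
  chainMatrix_eq_transpose fun x hx y _ => by simp [extMap, hx]

theorem chainMatrix_coextMap (W : MorseSeq V) (Λ : Finset V → Finset (Finset V)) :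
    chainMatrix W.cplx (coextMap W Λ) = (chainMatrix W.cplx Λ)ᵀ :=
  chainMatrix_extMap W Λ

theorem chainMatrix_cobd (W : MorseSeq V) :
    chainMatrix W.cplx (cobd W.cplx) = (chainMatrix W.cplx bd)ᵀ :=
  chainMatrix_eq_transpose fun x hx y hy => by
    simp [cobd, bd, hx, MorseSeq.nonempty_of_mem_cplx hy]

theorem chainMatrix_Vfs (W : MorseSeq V) :
    chainMatrix W.cplx (Vfs W) = (chainMatrix W.cplx (Vf W))ᵀ :=
  chainMatrix_eq_transpose fun _ _ _ _ => MorseSeq.mem_Vfs.trans MorseSeq.mem_Vf.symm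

theorem chainMatrix_PhiStarSimp (W : MorseSeq V) :
    chainMatrix W.cplx (PhiStarSimp W) = (chainMatrix W.cplx (PhiSimp W))ᵀ := by
  have hΦ : chainMatrix W.cplx (PhiSimp W) = _ :=
    chainMatrix_flowSimp W.Vf_subset_cplx W.bd_subset_cplx
  have hΦs : chainMatrix W.cplx (PhiStarSimp W) = _ :=
    chainMatrix_flowSimp W.Vfs_subset_cplx W.cobd_subset_cplx
  rw [hΦs, hΦ, chainMatrix_cobd, chainMatrix_Vfs, transpose_add, transpose_add, transpose_one,
    transpose_mul, transpose_mul, add_comm (_ᵀ * _ᵀ)]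

theorem IsFrame.subset_cplx (hΛ : IsFrame W Λ) : ∀ ν ∈ W.cplx, Λ ν ⊆ W.cplx :=
  fun ν hν _ hμ => (hΛ ν hν _ hμ).1.mem_cplx

theorem IsRefMap.chainMatrix_mul_PhiSimp (hΛ : IsRefMap W Λ) :
    chainMatrix W.cplx Λ * chainMatrix W.cplx (PhiSimp W) = chainMatrix W.cplx Λ :=
  chainMatrix_mul_flowSimp W.Vf_subset_cplx W.bd_subset_cplx
    fun σ _ τ hτ => hΛ.2.2 τ ⟨σ, MorseSeq.mem_Vf.1 hτ⟩

theorem IsCorefMap.chainMatrix_PhiSimp_mul_extMap (hV : IsCorefMap W Vee) :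
    chainMatrix W.cplx (PhiSimp W) * chainMatrix W.cplx (extMap W Vee) =
      chainMatrix W.cplx (extMap W Vee) := by
  have hΦs : chainMatrix W.cplx Vee * chainMatrix W.cplx (PhiStarSimp W) =
      chainMatrix W.cplx Vee :=
    chainMatrix_mul_flowSimp W.Vfs_subset_cplx W.cobd_subset_cplx
      fun τ _ σ hσ => hV.2.2 σ ⟨τ, MorseSeq.mem_Vfs.1 hσ⟩
  rw [chainMatrix_extMap, ← transpose_transpose (chainMatrix W.cplx (PhiSimp W)),
    ← chainMatrix_PhiStarSimp, ← transpose_mul, hΦs]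

theorem IsCorefMap.mem_extMap_self (hV : IsCorefMap W Vee) {κ : Finset V} (hκ : W.Critical κ) :
    κ ∈ extMap W Vee κ :=
  Finset.mem_filter.2 ⟨hκ.mem_cplx, hV.2.1 κ hκ ▸ Finset.mem_singleton_self κ⟩

theorem IsCorefMap.eq_or_upperRegular_of_mem_extMap (hV : IsCorefMap W Vee) {κ ν : Finset V}
    (hν : ν ∈ extMap W Vee κ) : ν = κ ∨ W.UpperRegular ν := by
  obtain ⟨hνK, hκν⟩ := Finset.mem_filter.1 hν
  rcases MorseSeq.critical_or_lowerRegular_or_upperRegular hνK with hcrit | hlow | hup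
  · rw [hV.2.1 ν hcrit, Finset.mem_singleton] at hκν
    exact Or.inl hκν.symm
  · rw [(hV.2.2 ν hlow).1] at hκν
    exact absurd hκν (Finset.notMem_empty κ)
  · exact Or.inr hup

theorem IsRefMap.col_mul_of_critical (hΛ : IsRefMap W Λ) (M : Matrix W.cplx W.cplx (ZMod 2))
    {y : W.cplx} (hy : W.Critical y.1) : (M * chainMatrix W.cplx Λ).col y = M.col y := by
  change M *ᵥ chainVec W.cplx (Λ y) = M.col y
  rw [hΛ.2.1 y hy, chainVec_singleton, mulVec_single_one]

theorem IsRefMap.col_mul_of_upperRegular (hΛ : IsRefMap W Λ)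
    (M : Matrix W.cplx W.cplx (ZMod 2)) {y : W.cplx} (hy : W.UpperRegular y.1) :
    (M * chainMatrix W.cplx Λ).col y = 0 := by
  change M *ᵥ chainVec W.cplx (Λ y) = 0
  rw [(hΛ.2.2 y hy).1, chainVec_empty, mulVec_zero]

theorem eventually_col_PhiSimp_pow_eq_zero (y : W.cplx) (hy : W.UpperRegular y.1) :
    ∀ᶠ n in atTop, (chainMatrix W.cplx (PhiSimp W) ^ n).col y = 0 := by
  induction hb : W.birth y.1 using Nat.strong_induction_on generalizing y with
  | _ b ih =>
    obtain ⟨σ, hreg⟩ := hy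
    refine eventually_col_pow_eq_of_mul_eq_left (P := 0) (zero_mul _) fun x hx => ?_
    obtain ⟨hup, hlt⟩ :=
      hreg.upperRegular_and_birth_lt_of_mem_PhiSimp (mem_of_chainMatrix_ne_zero hx)
    exact ih _ (hb ▸ hlt) x hup rfl

theorem IsCorefMap.eventually_col_PhiSimp_pow_eq (hV : IsCorefMap W Vee) (y : W.cplx)
    (hy : W.Critical y.1) : ∀ᶠ n in atTop,
      (chainMatrix W.cplx (PhiSimp W) ^ n).col y = (chainMatrix W.cplx (extMap W Vee)).col y := by
  refine eventually_col_pow_eq_of_mul_eq_right hV.chainMatrix_PhiSimp_mul_extMap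
    (if_pos (hV.mem_extMap_self hy)) fun x hne hx => ?_
  refine eventually_col_PhiSimp_pow_eq_zero x ?_
  exact (hV.eq_or_upperRegular_of_mem_extMap (mem_of_chainMatrix_ne_zero hx)).resolve_left
    fun hxy => hne (Subtype.ext hxy)

theorem eventually_col_PhiSimp_pow_eq_mul (hΛ : IsRefMap W Λ) (hV : IsCorefMap W Vee)
    (y : W.cplx) : ∀ᶠ n in atTop, (chainMatrix W.cplx (PhiSimp W) ^ n).col y =
      (chainMatrix W.cplx (extMap W Vee) * chainMatrix W.cplx Λ).col y := by
  induction hb : W.birth y.1 using Nat.strong_induction_on generalizing y with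
  | _ b ih =>
    rcases MorseSeq.critical_or_lowerRegular_or_upperRegular y.2 with hcrit | ⟨τ, hreg⟩ | hup
    · rw [hΛ.col_mul_of_critical _ hcrit]
      exact hV.eventually_col_PhiSimp_pow_eq y hcrit
    · refine eventually_col_pow_eq_of_mul_eq_left
        (by rw [mul_assoc, hΛ.chainMatrix_mul_PhiSimp]) fun x hx => ?_
      exact ih _ (hb ▸ hreg.birth_lt_of_mem_PhiSimp (mem_of_chainMatrix_ne_zero hx)) x rfl
    · rw [hΛ.col_mul_of_upperRegular _ hup]
      exact eventually_col_PhiSimp_pow_eq_zero y hup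

theorem eventually_chainMatrix_PhiSimp_pow_eq (hΛ : IsRefMap W Λ) (hV : IsCorefMap W Vee) :
    ∀ᶠ n in atTop, chainMatrix W.cplx (PhiSimp W) ^ n =
      chainMatrix W.cplx (extMap W Vee) * chainMatrix W.cplx Λ := by
  filter_upwards [eventually_all.2 (eventually_col_PhiSimp_pow_eq_mul hΛ hV)] with n hn
  exact ext_col hn

theorem eventually_chainMatrix_PhiStarSimp_pow_eq (hΛ : IsRefMap W Λ) (hV : IsCorefMap W Vee) :
    ∀ᶠ n in atTop, chainMatrix W.cplx (PhiStarSimp W) ^ n =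
      chainMatrix W.cplx (coextMap W Λ) * chainMatrix W.cplx Vee := by
  filter_upwards [eventually_chainMatrix_PhiSimp_pow_eq hΛ hV] with n hn
  rw [chainMatrix_PhiStarSimp, ← transpose_pow, hn, transpose_mul, chainMatrix_extMap,
    chainMatrix_coextMap, transpose_transpose]

theorem eventually_iterate_Phi_eq (hΛ : IsRefMap W Λ) (hV : IsCorefMap W Vee)
    {c : Finset (Finset V)} (hc : c ⊆ W.cplx) :
    ∀ᶠ n in atTop, (Phi W)^[n] c = chainSum (chainSum c Λ) (extMap W Vee) :=
  eventually_iterate_chainSum_eq W.PhiSimp_subset_cplx hΛ.1.subset_cplx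
    (fun _ _ => Finset.filter_subset _ _) hc (eventually_chainMatrix_PhiSimp_pow_eq hΛ hV)

theorem eventually_iterate_PhiStar_eq (hΛ : IsRefMap W Λ) (hV : IsCorefMap W Vee)
    {c : Finset (Finset V)} (hc : c ⊆ W.cplx) :
    ∀ᶠ n in atTop, (PhiStar W)^[n] c = chainSum (chainSum c Vee) (coextMap W Λ) :=
  eventually_iterate_chainSum_eq W.PhiStarSimp_subset_cplx hV.1.subset_cplx
    (fun _ _ => Finset.filter_subset _ _) hc (eventually_chainMatrix_PhiStarSimp_pow_eq hΛ hV)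

end ReferenceMaps

theorem flow_stabilizes_at_extension_of_reference_general (W : MorseSeq V)
    (Λ Vee : Finset V → Finset (Finset V))
    (hΛ : IsRefMap W Λ) (hV : IsCorefMap W Vee)
    (c : Finset (Finset V)) (hc : c ⊆ W.cplx) :
    ((∃ i, (Phi W)^[i + 1] c = (Phi W)^[i] c) ∧
      ∀ i, (Phi W)^[i + 1] c = (Phi W)^[i] c →
        (Phi W)^[i] c = chainSum (chainSum c Λ) (extMap W Vee)) ∧
    ((∃ j, (PhiStar W)^[j + 1] c = (PhiStar W)^[j] c) ∧
      ∀ j, (PhiStar W)^[j + 1] c = (PhiStar W)^[j] c →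
        (PhiStar W)^[j] c = chainSum (chainSum c Vee) (coextMap W Λ)) := by
  have hΦ := eventually_iterate_Phi_eq hΛ hV hc
  have hΦs := eventually_iterate_PhiStar_eq hΛ hV hc
  exact ⟨⟨exists_iterate_succ_eq_of_eventually hΦ, fun _ => iterate_eq_of_eventually hΦ⟩,
    ⟨exists_iterate_succ_eq_of_eventually hΦs, fun _ => iterate_eq_of_eventually hΦs⟩⟩

/-- For every `p`-chain `c` of `K`, the iterates of the gradient flow
`Φ` on `c` stabilize, and the stable value is `∧̃(∧(c))`; dually, the iterates of the
coflow `Φ*` stabilize at `∨̃(∨(c))`. -/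
theorem flow_stabilizes_at_extension_of_reference (W : MorseSeq V)
    (Λ Vee : Finset V → Finset (Finset V))
    (hΛ : IsRefMap W Λ) (hV : IsCorefMap W Vee)
    (p : ℕ) (c : Finset (Finset V)) (hc : IsChainOf W.cplx p c) :
    ((∃ i, (Phi W)^[i + 1] c = (Phi W)^[i] c) ∧
      ∀ i, (Phi W)^[i + 1] c = (Phi W)^[i] c →
        (Phi W)^[i] c = chainSum (chainSum c Λ) (extMap W Vee)) ∧
    ((∃ j, (PhiStar W)^[j + 1] c = (PhiStar W)^[j] c) ∧
      ∀ j, (PhiStar W)^[j + 1] c = (PhiStar W)^[j] c →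
        (PhiStar W)^[j] c = chainSum (chainSum c Vee) (coextMap W Λ)) := by
  exact flow_stabilizes_at_extension_of_reference_general W Λ Vee hΛ hV c fun ν hν => (hc ν hν).1
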